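/- Let k ≥ 1, let X be a compact topological space equipped with a nonzero finite Borel measure μ, and let g : ℝᵏ → ℝᵏ be continuous and bounded such that there exists ρ > 0 with g(w) ≠ 0 whenever ‖w‖ ≥ ρ, and such that there exists a map φ : S^{k-1} → ℝᵏ with g(rz)/‖g(rz)‖ → φ(z) as r → ∞, uniformly for z ∈ S^{k-1} (i.e. for every ε > 0 there is r₀ ≥ ρ such that for all r ≥ r₀ and all z ∈ S^{k-1}, ‖g(rz)/‖g(rz)‖ − φ(z)‖ ≤ ε). Then for every constant C > 0 there exists R > 0 such that for every continuous function u : X → ℝᵏ whose average ū := (1/μ(X)) ∫_X u dμ satisfies ‖ū‖ ≥ R and sup_{x ∈ X} ‖u(x) − ū‖ ≤ C, one has ∫_X g(u(x)) dμ(x) ≠ 0. -/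

import Mathlib

open MeasureTheory Filter
open scoped RealInnerProductSpace

/-!
Write `h w = g w / ‖g w‖`. The radial limit `φ` is continuous, being a uniform limit of continuous
functions on the compact unit sphere, hence uniformly continuous, and `h w` is asymptotic to
`φ (w / ‖w‖)`. Points within a fixed distance `C` of a far away point `v` have almost the same
direction as `v`, so `h` oscillates little on the ball of radius `C` around `v`. In particular
`⟪g v, g w⟫ > 0` for all `w` in this ball, and integrating `⟪g v, g (u x)⟫` shows that
`∫ g (u x) ∂μ` cannot vanish.
-/

open Bornology Metric NormedSpace Topology

section SlowlyOscillating

variable {α β γ : Type*} [PseudoMetricSpace α] [PseudoMetricSpace β] [PseudoMetricSpace γ]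

theorem eventually_cobounded_forall_mem_closedBall {p : α → Prop}
    (hp : ∀ᶠ x in cobounded α, p x) (C : ℝ) :
    ∀ᶠ x in cobounded α, ∀ y ∈ closedBall x C, p y := by
  have hbdd : IsBounded {x | ¬p x} := isBounded_compl_iff.2 hp
  filter_upwards [isBounded_def.1 (hbdd.cthickening (δ := C))] with x hx y hy
  by_contra hpy
  exact hx (mem_cthickening_of_dist_le x y C _ hpy (dist_comm y x ▸ hy))

/-- A map between metric spaces is *slowly oscillating* (in the sense of Higson) if its oscillation
over balls of any fixed radius tends to zero as the center goes to infinity. -/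
def SlowlyOscillating (f : α → β) : Prop :=
  ∀ C, ∀ ε > 0, ∀ᶠ x in cobounded α, ∀ y ∈ closedBall x C, dist (f y) (f x) < ε

namespace SlowlyOscillating

theorem comp_uniformContinuousOn {f : α → β} {φ : β → γ} {s : Set β} (hf : SlowlyOscillating f)
    (hφ : UniformContinuousOn φ s) (hs : ∀ᶠ x in cobounded α, f x ∈ s) :
    SlowlyOscillating fun x ↦ φ (f x) := by
  intro C ε hε
  obtain ⟨δ, hδ, hφδ⟩ := Metric.uniformContinuousOn_iff.1 hφ ε hε
  filter_upwards [hf C δ hδ, hs, eventually_cobounded_forall_mem_closedBall hs C]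
    with x hosc hx hball y hy
  exact hφδ _ (hball y hy) _ hx (hosc y hy)

theorem of_tendsto_dist {f g : α → β} (hg : SlowlyOscillating g)
    (hfg : Tendsto (fun x ↦ dist (f x) (g x)) (cobounded α) (𝓝 0)) : SlowlyOscillating f := by
  intro C ε hε
  have hclose : ∀ᶠ x in cobounded α, dist (f x) (g x) < ε / 3 :=
    hfg.eventually_lt_const (by positivity)
  filter_upwards [hclose, eventually_cobounded_forall_mem_closedBall hclose C,
    hg C (ε / 3) (by positivity)] with x hx hball hosc y hy
  calc dist (f y) (f x) ≤ dist (f y) (g y) + dist (g y) (g x) + dist (g x) (f x) :=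
        dist_triangle4 ..
    _ < ε / 3 + ε / 3 + ε / 3 := by
        rw [dist_comm (g x)]
        exact add_lt_add (add_lt_add (hball y hy) (hosc y hy)) hx
    _ = ε := by ring

end SlowlyOscillating

end SlowlyOscillating

section Normalize

variable {E : Type*} [NormedAddCommGroup E] [NormedSpace ℝ E]

theorem norm_normalize_le_one (v : E) : ‖normalize v‖ ≤ 1 := by
  rcases eq_or_ne v 0 with rfl | hv
  · simp
  · exact (norm_normalize hv).le

theorem norm_mul_dist_normalize_le (v w : E) :
    ‖v‖ * dist (normalize w) (normalize v) ≤ 2 * dist w v := by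
  have hdecomp : ‖v‖ • (normalize w - normalize v)
      = (‖v‖ - ‖w‖) • normalize w + (w - v) := by
    rw [smul_sub, sub_smul, norm_smul_normalize, norm_smul_normalize]
    abel
  calc ‖v‖ * dist (normalize w) (normalize v) = ‖‖v‖ • (normalize w - normalize v)‖ := by
        rw [norm_smul, norm_norm, dist_eq_norm]
    _ ≤ |‖v‖ - ‖w‖| * ‖normalize w‖ + ‖w - v‖ := by
        rw [hdecomp, ← Real.norm_eq_abs, ← norm_smul]
        exact norm_add_le _ _
    _ ≤ ‖w - v‖ * 1 + ‖w - v‖ := by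
        gcongr
        · exact abs_sub_comm ‖w‖ ‖v‖ ▸ abs_norm_sub_norm_le w v
        · exact norm_normalize_le_one w
    _ = 2 * dist w v := by rw [dist_eq_norm]; ring

theorem slowlyOscillating_normalize : SlowlyOscillating (normalize : E → E) := by
  intro C ε hε
  filter_upwards [tendsto_norm_cobounded_atTop.eventually_gt_atTop 0,
    tendsto_norm_cobounded_atTop.eventually_gt_atTop (2 * C / ε)] with v hv hvC w hw
  rw [div_lt_iff₀ hε] at hvC
  refine lt_of_mul_lt_mul_left ?_ hv.le
  calc ‖v‖ * dist (normalize w) (normalize v) ≤ 2 * dist w v := norm_mul_dist_normalize_le v w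
    _ ≤ 2 * C := by gcongr; exact hw
    _ < ‖v‖ * ε := hvC

theorem eventually_normalize_mem_sphere :
    ∀ᶠ v in cobounded E, NormedSpace.normalize v ∈ sphere (0 : E) 1 := by
  filter_upwards [tendsto_norm_cobounded_atTop.eventually_gt_atTop 0] with v hv
  exact mem_sphere_zero_iff_norm.2 (norm_normalize (norm_pos_iff.1 hv))

theorem eventually_atTop_forall_mem_sphere_smul {p : E → Prop}
    (hp : ∀ᶠ v in cobounded E, p v) : ∀ᶠ r : ℝ in atTop, ∀ z ∈ sphere (0 : E) 1, p (r • z) := by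
  rw [← comap_norm_atTop, eventually_comap] at hp
  filter_upwards [hp, eventually_ge_atTop 0] with r hr hr0 z hz
  exact hr _ (by rw [norm_smul, mem_sphere_zero_iff_norm.1 hz, mul_one, Real.norm_of_nonneg hr0])

end Normalize

section RadialLimit

variable {E F : Type*} [NormedAddCommGroup E] [NormedSpace ℝ E]

theorem tendstoUniformlyOn_sphere_iff_norm_sub_le [SeminormedAddCommGroup F] {f φ : E → F} :
    TendstoUniformlyOn (fun (r : ℝ) z ↦ f (r • z)) φ atTop (sphere 0 1) ↔
      ∀ ε > 0, ∃ r₀ : ℝ, ∀ r, r₀ ≤ r → ∀ z : E, ‖z‖ = 1 → ‖f (r • z) - φ z‖ ≤ ε := by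
  simp only [atTop_basis.tendstoUniformlyOn_iff uniformity_basis_dist_le, true_and, Set.mem_Ici,
    mem_sphere_zero_iff_norm, Set.mem_ofPred_eq, dist_eq_norm_sub', gt_iff_lt]

theorem tendsto_dist_normalize_of_tendstoUniformlyOn_sphere [PseudoMetricSpace F] {f φ : E → F}
    (hφ : TendstoUniformlyOn (fun (r : ℝ) z ↦ f (r • z)) φ atTop (sphere 0 1)) :
    Tendsto (fun v ↦ dist (f v) (φ (normalize v))) (cobounded E) (𝓝 0) := by
  refine tendsto_order.2 ⟨fun a ha ↦ .of_forall fun v ↦ ha.trans_le dist_nonneg, fun ε hε ↦ ?_⟩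
  filter_upwards [tendsto_norm_cobounded_atTop.eventually (tendstoUniformlyOn_iff.1 hφ ε hε),
    eventually_normalize_mem_sphere] with v hclose hv
  simpa only [norm_smul_normalize, dist_comm] using hclose _ hv

theorem slowlyOscillating_of_tendstoUniformlyOn_sphere [ProperSpace E] [PseudoMetricSpace F]
    {f φ : E → F} (hf : ∀ᶠ v in cobounded E, ContinuousAt f v)
    (hφ : TendstoUniformlyOn (fun (r : ℝ) z ↦ f (r • z)) φ atTop (sphere 0 1)) :
    SlowlyOscillating f := by
  have hcont : ∀ᶠ r : ℝ in atTop, ContinuousOn (fun z ↦ f (r • z)) (sphere 0 1) :=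
    (eventually_atTop_forall_mem_sphere_smul hf).mono fun r hr z hz ↦
      ((hr z hz).comp (f := fun z ↦ r • z) (by fun_prop)).continuousWithinAt
  have hφ_unif : UniformContinuousOn φ (sphere 0 1) :=
    (isCompact_sphere 0 1).uniformContinuousOn_of_continuous (hφ.continuousOn hcont.frequently)
  exact (slowlyOscillating_normalize.comp_uniformContinuousOn hφ_unif
    eventually_normalize_mem_sphere).of_tendsto_dist
      (tendsto_dist_normalize_of_tendstoUniformlyOn_sphere hφ)

end RadialLimit

section Inner

variable {F : Type*} [NormedAddCommGroup F] [InnerProductSpace ℝ F]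

theorem inner_pos_of_dist_normalize_lt_sqrt_two {a b : F} (ha : a ≠ 0) (hb : b ≠ 0)
    (hab : dist (normalize b) (normalize a) < √2) : 0 < ⟪a, b⟫ := by
  have hunit : 0 < ⟪normalize a, normalize b⟫ := by
    rw [dist_comm, dist_eq_norm, Real.lt_sqrt (norm_nonneg _), norm_sub_sq_real,
      norm_normalize ha, norm_normalize hb] at hab
    linarith
  rw [← norm_smul_normalize a, ← norm_smul_normalize b, real_inner_smul_left,
    real_inner_smul_right]
  have := norm_pos_iff.2 ha
  have := norm_pos_iff.2 hb
  positivity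

theorem integral_ne_zero_of_ae_inner_pos [CompleteSpace F] {X : Type*} [MeasurableSpace X]
    {μ : Measure X} (hμ : μ ≠ 0) {f : X → F} (hf : Integrable f μ) (a : F)
    (hpos : ∀ᵐ x ∂μ, 0 < ⟪a, f x⟫) : ∫ x, f x ∂μ ≠ 0 := by
  intro hzero
  have hsupp : Function.support (fun x ↦ ⟪a, f x⟫) =ᵐ[μ] Set.univ :=
    eventuallyEq_univ.2 (hpos.mono fun x hx ↦ hx.ne')
  have hinner : 0 < ∫ x, ⟪a, f x⟫ ∂μ := by
    rw [integral_pos_iff_support_of_nonneg_ae (hpos.mono fun x hx ↦ hx.le) (hf.const_inner a),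
      measure_congr hsupp]
    exact Measure.measure_univ_pos.2 hμ
  rw [integral_inner hf, hzero, inner_zero_right] at hinner
  exact hinner.false

theorem eventually_cobounded_forall_mem_closedBall_inner_pos {α : Type*} [PseudoMetricSpace α]
    {g : α → F} (hg_ne : ∀ᶠ v in cobounded α, g v ≠ 0)
    (hg : SlowlyOscillating fun v ↦ normalize (g v)) (C : ℝ) :
    ∀ᶠ v in cobounded α, ∀ w ∈ closedBall v C, 0 < ⟪g v, g w⟫ := by
  filter_upwards [hg C (√2) (by positivity), hg_ne,
    eventually_cobounded_forall_mem_closedBall hg_ne C] with v hosc hv hball w hw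
  exact inner_pos_of_dist_normalize_lt_sqrt_two hv (hball w hw) (hosc w hw)

end Inner

theorem integrable_comp_of_ae_mem_closedBall {X E F : Type*} [MeasurableSpace X]
    [PseudoMetricSpace E] [ProperSpace E] [NormedAddCommGroup F] {μ : Measure X}
    [IsFiniteMeasure μ] {g : E → F} (hg : Continuous g) {u : X → E}
    (hu : AEStronglyMeasurable u μ) {v : E} {C : ℝ} (huv : ∀ᵐ x ∂μ, u x ∈ closedBall v C) :
    Integrable (fun x ↦ g (u x)) μ := by
  obtain ⟨M, hM⟩ := (isCompact_closedBall v C).exists_bound_of_continuousOn hg.continuousOn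
  exact .of_bound (hg.comp_aestronglyMeasurable hu) M (huv.mono fun x hx ↦ hM _ hx)

theorem stmt_0_general {E F : Type*} [NormedAddCommGroup E] [NormedSpace ℝ E] [ProperSpace E]
    [NormedAddCommGroup F] [InnerProductSpace ℝ F] [CompleteSpace F]
    {g : E → F} (hg_cont : Continuous g) (hg_ne : ∀ᶠ w in cobounded E, g w ≠ 0)
    {φ : E → F}
    (hφ : TendstoUniformlyOn (fun (r : ℝ) z ↦ normalize (g (r • z))) φ atTop (sphere 0 1))
    (C : ℝ) :
    ∃ R > (0 : ℝ), ∀ {X : Type*} [MeasurableSpace X] {μ : Measure X} [IsFiniteMeasure μ],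
      μ ≠ 0 → ∀ (u : X → E) (v : E), AEStronglyMeasurable u μ → R ≤ ‖v‖ →
      (∀ᵐ x ∂μ, ‖u x - v‖ ≤ C) → ∫ x, g (u x) ∂μ ≠ 0 := by
  have hcont_normalize : ∀ᶠ w in cobounded E, ContinuousAt (fun w ↦ normalize (g w)) w :=
    hg_ne.mono fun w hw ↦
      (hg_cont.continuousAt.norm.inv₀ (norm_ne_zero_iff.2 hw)).smul hg_cont.continuousAt
  obtain ⟨R, -, hR⟩ := hasBasis_cobounded_norm.eventually_iff.1
    (eventually_cobounded_forall_mem_closedBall_inner_pos hg_ne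
      (slowlyOscillating_of_tendstoUniformlyOn_sphere hcont_normalize hφ) C)
  refine ⟨max R 1, by positivity, fun {X} _ μ _ hμ u v hu hv huv ↦ ?_⟩
  have hball : ∀ᵐ x ∂μ, u x ∈ closedBall v C := by simpa only [mem_closedBall_iff_norm] using huv
  exact integral_ne_zero_of_ae_inner_pos hμ
    (integrable_comp_of_ae_mem_closedBall hg_cont hu hball) (g v)
    (hball.mono fun x hx ↦ hR ((le_max_left R 1).trans hv) _ hx)

/-- Lemma 1 of the paper: if `g` is continuous, bounded, nonvanishing outside a ball,
and its radial normalizations converge uniformly on the unit sphere to `φ`, then for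
every `C > 0` there is `R > 0` such that any continuous `u : X → ℝᵏ` whose average `ū`
satisfies `‖ū‖ ≥ R` and `‖u x - ū‖ ≤ C` for all `x` has `∫ g (u x) dμ ≠ 0`. -/
theorem stmt_0 (k : ℕ) (hk : 1 ≤ k)
    (X : Type*) [TopologicalSpace X] [CompactSpace X]
    [MeasurableSpace X] [BorelSpace X]
    (μ : Measure X) [IsFiniteMeasure μ] (hμ : μ ≠ 0)
    (g : EuclideanSpace ℝ (Fin k) → EuclideanSpace ℝ (Fin k))
    (hg_cont : Continuous g)
    (M : ℝ) (hg_bdd : ∀ w, ‖g w‖ ≤ M)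
    (ρ : ℝ) (hρ : 0 < ρ)
    (hg_ne : ∀ w : EuclideanSpace ℝ (Fin k), ρ ≤ ‖w‖ → g w ≠ 0)
    (φ : EuclideanSpace ℝ (Fin k) → EuclideanSpace ℝ (Fin k))
    (hφ : ∀ ε > (0 : ℝ), ∃ r₀ : ℝ, ρ ≤ r₀ ∧ ∀ r : ℝ, r₀ ≤ r →
      ∀ z : EuclideanSpace ℝ (Fin k), ‖z‖ = 1 →
        ‖‖g (r • z)‖⁻¹ • g (r • z) - φ z‖ ≤ ε)
    (C : ℝ) (hC : 0 < C) :
    ∃ R > (0 : ℝ), ∀ u : X → EuclideanSpace ℝ (Fin k), Continuous u →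
      R ≤ ‖(μ Set.univ).toReal⁻¹ • ∫ x, u x ∂μ‖ →
      (∀ x : X, ‖u x - (μ Set.univ).toReal⁻¹ • ∫ y, u y ∂μ‖ ≤ C) →
      (∫ x, g (u x) ∂μ) ≠ 0 := by
  obtain ⟨R, hR, hR_integral⟩ := stmt_0_general hg_cont
    (hasBasis_cobounded_norm.eventually_iff.2 ⟨ρ, trivial, fun w ↦ hg_ne w⟩)
    ((tendstoUniformlyOn_sphere_iff_norm_sub_le (f := fun w ↦ NormedSpace.normalize (g w))).2
      fun ε hε ↦ (hφ ε hε).imp fun _ ↦ And.right) C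
  exact ⟨R, hR, fun u hu hu_avg hu_near ↦
    hR_integral hμ u _ hu.aestronglyMeasurable hu_avg (.of_forall hu_near)⟩
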